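/- arXiv:2411.04031 — 2 statements merged into one kernel-verified Lean document; each statement's English description precedes it below -/
import Mathlib

section
/- (Soundness) For all sets of formulas Φ ∪ {ψ} ⊆ L_⟹: if Φ ⊢ ψ in the Hilbert system for InqML_⟹, then Φ ⊨ ψ (every information state of every in-model that supports all formulas in Φ supports ψ). -/
/-- Formulas of the inquisitive modal language `L_⟹`. -/
inductive Form (P : Type) : Type
  | atom : P → Form P
  | bot : Form P
  | and : Form P → Form P → Form P
  | impl : Form P → Form P → Form P
  | idisj : Form P → Form P → Form P
  | yields : Form P → Form P → Form P

/-- An inhabited neighborhood model (in-model). -/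
structure InModel (P : Type) where
  W : Type
  ne : Nonempty W
  Nb : W → Set (Set W)
  nb_nonempty : ∀ w, ∀ s ∈ Nb w, s.Nonempty
  V : W → P → Bool

/-- Support of a formula at an information state. -/
def support {P : Type} (M : InModel P) : Form P → Set M.W → Prop
  | .atom p, s => ∀ w ∈ s, M.V w p = true
  | .bot, s => s = ∅
  | .and φ ψ, s => support M φ s ∧ support M ψ s
  | .impl φ ψ, s => ∀ t : Set M.W, t ⊆ s → support M φ t → support M ψ t
  | .idisj φ ψ, s => support M φ s ∨ support M ψ s
  | .yields φ ψ, s => ∀ w ∈ s, ∀ t ∈ M.Nb w, support M φ t → support M ψ t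

/-- Truth at a world: support at the corresponding singleton state. -/
def truth {P : Type} (M : InModel P) (w : M.W) (φ : Form P) : Prop :=
  support M φ {w}

/-- A formula is truth-conditional if support at any state amounts to truth at
every world of the state. -/
def TruthConditional {P : Type} (φ : Form P) : Prop :=
  ∀ (M : InModel P) (s : Set M.W), support M φ s ↔ ∀ w ∈ s, truth M w φ

/-- Logical equivalence: same supporting states in every in-model. -/
def EquivF {P : Type} (φ ψ : Form P) : Prop :=
  ∀ (M : InModel P) (s : Set M.W), support M φ s ↔ support M ψ s

def Form.neg {P : Type} (φ : Form P) : Form P := .impl φ .bot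
def Form.top {P : Type} : Form P := Form.neg .bot
def Form.or {P : Type} (φ ψ : Form P) : Form P := Form.neg (.and (Form.neg φ) (Form.neg ψ))
def Form.box {P : Type} (φ : Form P) : Form P := .yields Form.top φ
def Form.dia {P : Type} (φ : Form P) : Form P := Form.neg (.yields φ .bot)
def Form.quest {P : Type} (φ : Form P) : Form P := .idisj φ (Form.neg φ)

/-- Declaratives: formulas where `⩔` occurs only within the scope of `⟹`. -/
inductive IsDecl {P : Type} : Form P → Prop
  | atom (p : P) : IsDecl (.atom p)
  | bot : IsDecl .bot
  | and {α β : Form P} : IsDecl α → IsDecl β → IsDecl (.and α β)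
  | impl {α β : Form P} : IsDecl α → IsDecl β → IsDecl (.impl α β)
  | yields (φ ψ : Form P) : IsDecl (.yields φ ψ)

/-- Derivability in the Hilbert system for `InqML_⟹`: a standard axiomatization
of intuitionistic propositional logic (with `⩔` as intuitionistic disjunction),
the inquisitive axioms `DDN` and `Split` for declaratives, the modal axioms
`Trans`, `RConj`, `LDisj`, and the rules of modus ponens and conditional
necessitation. -/
inductive Deriv {P : Type} : Form P → Prop
  -- intuitionistic propositional axioms
  | ax_k {φ ψ : Form P} : Deriv (.impl φ (.impl ψ φ))
  | ax_s {φ ψ χ : Form P} :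
      Deriv (.impl (.impl φ (.impl ψ χ)) (.impl (.impl φ ψ) (.impl φ χ)))
  | and_intro {φ ψ : Form P} : Deriv (.impl φ (.impl ψ (.and φ ψ)))
  | and_elim_left {φ ψ : Form P} : Deriv (.impl (.and φ ψ) φ)
  | and_elim_right {φ ψ : Form P} : Deriv (.impl (.and φ ψ) ψ)
  | idisj_intro_left {φ ψ : Form P} : Deriv (.impl φ (.idisj φ ψ))
  | idisj_intro_right {φ ψ : Form P} : Deriv (.impl ψ (.idisj φ ψ))
  | idisj_elim {φ ψ χ : Form P} :
      Deriv (.impl (.impl φ χ) (.impl (.impl ψ χ) (.impl (.idisj φ ψ) χ)))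
  | exfalso {φ : Form P} : Deriv (.impl .bot φ)
  -- inquisitive axioms for declaratives
  | ddn {α : Form P} : IsDecl α → Deriv (.impl (Form.neg (Form.neg α)) α)
  | split {α φ ψ : Form P} : IsDecl α →
      Deriv (.impl (.impl α (.idisj φ ψ)) (.idisj (.impl α φ) (.impl α ψ)))
  -- modal axioms
  | trans {φ ψ χ : Form P} :
      Deriv (.impl (.and (.yields φ ψ) (.yields ψ χ)) (.yields φ χ))
  | rconj {φ ψ χ : Form P} :
      Deriv (.impl (.and (.yields φ ψ) (.yields φ χ)) (.yields φ (.and ψ χ)))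
  | ldisj {φ ψ χ : Form P} :
      Deriv (.impl (.and (.yields φ χ) (.yields ψ χ)) (.yields (.idisj φ ψ) χ))
  -- rules
  | mp {φ ψ : Form P} : Deriv (.impl φ ψ) → Deriv φ → Deriv ψ
  | cn {φ ψ : Form P} : Deriv (.impl φ ψ) → Deriv (.yields φ ψ)

def bigAnd {P : Type} : List (Form P) → Form P
  | [] => Form.top
  | [φ] => φ
  | φ :: rest => .and φ (bigAnd rest)

/-- `Φ ⊢ ψ`: for some `φ₁, …, φₙ ∈ Φ` (possibly `n = 0`, with `⊤` as
antecedent), the formula `(φ₁ ∧ … ∧ φₙ) → ψ` is derivable. -/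
def SDeriv {P : Type} (Φ : Set (Form P)) (ψ : Form P) : Prop :=
  ∃ l : List (Form P), (∀ φ ∈ l, φ ∈ Φ) ∧ Deriv (.impl (bigAnd l) ψ)

/-- `Φ ⊨ ψ`: every information state of every in-model supporting all formulas
of `Φ` supports `ψ`. -/
def Entails {P : Type} (Φ : Set (Form P)) (ψ : Form P) : Prop :=
  ∀ (M : InModel P) (s : Set M.W), (∀ φ ∈ Φ, support M φ s) → support M ψ s

/-!
Declaratives are truth-conditional: a state supports `α` as soon as each of its worlds does.
Hence every state `s` has a largest substate supporting `α`, namely `{w ∈ s | truth M w α}`, and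
since support is inherited by substates, `s` supports `α → φ` if and only if this substate supports
`φ`. This turns `Split` into a tautology. Likewise `¬¬α` says that `α` is true at every world,
which gives `DDN`. The remaining axioms and rules hold directly by the support clauses.
-/

section Support

variable {P : Type} {M : InModel P} {φ ψ : Form P} {s : Set M.W} {w : M.W}

theorem antitone_support (M : InModel P) (φ : Form P) : Antitone (support M φ) := by
  intro t s hts
  induction φ with
  | atom p => exact fun hs w hw ↦ hs w (hts hw)
  | bot => exact Set.subset_eq_empty hts
  | and φ ψ ihφ ihψ => exact And.imp ihφ ihψ
  | impl φ ψ => exact fun hs u hu ↦ hs u (hu.trans hts)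
  | idisj φ ψ ihφ ihψ => exact Or.imp ihφ ihψ
  | yields φ ψ => exact fun hs w hw ↦ hs w (hts hw)

theorem truth_of_support (hs : support M φ s) (hw : w ∈ s) : truth M w φ :=
  antitone_support M φ (Set.singleton_subset_iff.2 hw) hs

theorem support_empty (M : InModel P) (φ : Form P) : support M φ ∅ := by
  induction φ with
  | atom p => exact fun _ hw ↦ hw.elim
  | bot => rfl
  | and φ ψ ihφ ihψ => exact ⟨ihφ, ihψ⟩
  | impl φ ψ _ ihψ =>
    intro t ht _
    rwa [Set.subset_empty_iff.1 ht]
  | idisj φ ψ ihφ => exact Or.inl ihφ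
  | yields φ ψ => exact fun _ hw ↦ hw.elim

theorem forall_support_impl_iff :
    (∀ s, support M (.impl φ ψ) s) ↔ ∀ s, support M φ s → support M ψ s :=
  ⟨fun h s ↦ h s s subset_rfl, fun h _ t _ ↦ h t⟩

theorem support_neg_iff : support M φ.neg s ↔ ∀ w ∈ s, ¬ truth M w φ := by
  constructor
  · intro hs w hw htruth
    exact Set.singleton_ne_empty w (hs {w} (Set.singleton_subset_iff.2 hw) htruth)
  · intro hs t hts ht
    exact Set.eq_empty_of_forall_notMem fun w hw ↦ hs w (hts hw) (truth_of_support ht hw)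

theorem truth_neg_iff : truth M w φ.neg ↔ ¬ truth M w φ := by
  simp [truth, support_neg_iff]

theorem support_neg_neg_iff : support M φ.neg.neg s ↔ ∀ w ∈ s, truth M w φ := by
  simp only [support_neg_iff, truth_neg_iff, not_not]

theorem support_bigAnd_iff :
    ∀ {l : List (Form P)}, support M (bigAnd l) s ↔ ∀ φ ∈ l, support M φ s
  | [] => by simp [bigAnd, Form.top, Form.neg, support]
  | [φ] => by simp [bigAnd]
  | φ :: χ :: l => by
    rw [List.forall_mem_cons, ← support_bigAnd_iff (l := χ :: l)]
    rfl

end Support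

section TruthConditional

variable {P : Type} {α φ ψ : Form P}

theorem TruthConditional.of_forall_truth
    (h : ∀ (M : InModel P) (s : Set M.W), (∀ w ∈ s, truth M w φ) → support M φ s) :
    TruthConditional φ :=
  fun M s ↦ ⟨fun hs _ hw ↦ truth_of_support hs hw, h M s⟩

theorem truthConditional_atom (p : P) : TruthConditional (.atom p) :=
  .of_forall_truth fun _ _ h w hw ↦ h w hw w rfl

theorem truthConditional_bot : TruthConditional (.bot : Form P) :=
  .of_forall_truth fun _ _ h ↦
    Set.eq_empty_of_forall_notMem fun w hw ↦ Set.singleton_ne_empty w (h w hw)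

theorem TruthConditional.and (hφ : TruthConditional φ) (hψ : TruthConditional ψ) :
    TruthConditional (.and φ ψ) :=
  .of_forall_truth fun M s h ↦
    ⟨(hφ M s).2 fun w hw ↦ (h w hw).1, (hψ M s).2 fun w hw ↦ (h w hw).2⟩

theorem TruthConditional.impl (φ : Form P) (hψ : TruthConditional ψ) :
    TruthConditional (.impl φ ψ) :=
  .of_forall_truth fun M _ h t hts ht ↦
    (hψ M t).2 fun w hw ↦ h w (hts hw) {w} subset_rfl (truth_of_support ht hw)

theorem truthConditional_yields (φ ψ : Form P) : TruthConditional (.yields φ ψ) :=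
  .of_forall_truth fun _ _ h w hw ↦ h w hw w rfl

theorem IsDecl.truthConditional (hα : IsDecl α) : TruthConditional α := by
  induction hα with
  | atom p => exact truthConditional_atom p
  | bot => exact truthConditional_bot
  | and _ _ ihα ihβ => exact ihα.and ihβ
  | impl _ _ _ ihβ => exact ihβ.impl _
  | yields φ ψ => exact truthConditional_yields φ ψ

theorem TruthConditional.equivF_neg_neg (hφ : TruthConditional φ) : EquivF φ.neg.neg φ :=
  fun M s ↦ support_neg_neg_iff.trans (hφ M s).symm

theorem TruthConditional.support_impl_iff (hα : TruthConditional α) (M : InModel P)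
    (s : Set M.W) : support M (.impl α φ) s ↔ support M φ {w ∈ s | truth M w α} := by
  constructor
  · exact fun h ↦ h _ (Set.sep_subset _ _) ((hα M _).2 fun _ hw ↦ hw.2)
  · intro h t hts ht
    have ht_sub : t ⊆ {w ∈ s | truth M w α} := fun _ hw ↦ ⟨hts hw, truth_of_support ht hw⟩
    exact antitone_support M φ ht_sub h

theorem TruthConditional.equivF_impl_idisj (hα : TruthConditional α) (φ ψ : Form P) :
    EquivF (.impl α (.idisj φ ψ)) (.idisj (.impl α φ) (.impl α ψ)) :=
  fun M s ↦ calc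
    support M (.impl α (.idisj φ ψ)) s
      ↔ support M φ {w ∈ s | truth M w α} ∨ support M ψ {w ∈ s | truth M w α} :=
        hα.support_impl_iff M s
    _ ↔ support M (.impl α φ) s ∨ support M (.impl α ψ) s :=
        or_congr (hα.support_impl_iff M s).symm (hα.support_impl_iff M s).symm

end TruthConditional

theorem Deriv.forall_support {P : Type} {φ : Form P} (h : Deriv φ) (M : InModel P) :
    ∀ s, support M φ s := by
  induction h with
  | ax_k => exact forall_support_impl_iff.2 fun _ hφ u hut _ ↦ antitone_support M _ hut hφ
  | ax_s =>
    exact forall_support_impl_iff.2 fun _ hφψχ u hut hφψ v hvu hφ ↦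
      hφψχ v (hvu.trans hut) hφ v subset_rfl (hφψ v hvu hφ)
  | and_intro =>
    exact forall_support_impl_iff.2 fun _ hφ u hut hψ ↦
      ⟨antitone_support M _ hut hφ, hψ⟩
  | and_elim_left => exact forall_support_impl_iff.2 fun _ h ↦ h.1
  | and_elim_right => exact forall_support_impl_iff.2 fun _ h ↦ h.2
  | idisj_intro_left => exact forall_support_impl_iff.2 fun _ ↦ Or.inl
  | idisj_intro_right => exact forall_support_impl_iff.2 fun _ ↦ Or.inr
  | idisj_elim =>
    exact forall_support_impl_iff.2 fun _ hφχ u hut hψχ v hvu hφψ ↦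
      hφψ.elim (hφχ v (hvu.trans hut)) (hψχ v hvu)
  | exfalso =>
    refine forall_support_impl_iff.2 ?_
    rintro t (rfl : t = ∅)
    exact support_empty M _
  | ddn hα => exact forall_support_impl_iff.2 fun t ↦ (hα.truthConditional.equivF_neg_neg M t).1
  | split hα =>
    exact forall_support_impl_iff.2 fun t ↦
      (hα.truthConditional.equivF_impl_idisj _ _ M t).1
  | trans =>
    exact forall_support_impl_iff.2 fun _ h w hw u hu hφ ↦
      h.2 w hw u hu (h.1 w hw u hu hφ)
  | rconj =>
    exact forall_support_impl_iff.2 fun _ h w hw u hu hφ ↦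
      ⟨h.1 w hw u hu hφ, h.2 w hw u hu hφ⟩
  | ldisj =>
    exact forall_support_impl_iff.2 fun _ h w hw u hu hφψ ↦
      hφψ.elim (h.1 w hw u hu) (h.2 w hw u hu)
  | mp _ _ ihφψ ihφ => exact fun s ↦ forall_support_impl_iff.1 ihφψ s (ihφ s)
  | cn _ ihφψ => exact fun _ _ _ t _ ↦ forall_support_impl_iff.1 ihφψ t

/-- soundness of the Hilbert system for `InqML_⟹`. -/
theorem soundness {P : Type} (Φ : Set (Form P)) (ψ : Form P) :
    SDeriv Φ ψ → Entails Φ ψ := by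
  rintro ⟨l, hl, hderiv⟩ M s hs
  have hconj : support M (bigAnd l) s := support_bigAnd_iff.2 fun φ hφ ↦ hs φ (hl φ hφ)
  exact forall_support_impl_iff.1 (hderiv.forall_support M) s hconj
end

section
/- (Strong completeness) For all sets of formulas Φ ∪ {ψ} ⊆ L_⟹: if Φ ⊨ ψ (every information state of every in-model that supports all formulas in Φ supports ψ), then Φ ⊢ ψ in the Hilbert system for InqML_⟹. -/
/-!
Every formula is interderivable with the inquisitive disjunction of its resolutions, which are
declaratives; by the axiom `split`, a prime theory contains a formula iff it contains one of its
resolutions. The worlds of the canonical model are the consistent prime theories of the classical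
consequence relation `⊢ φ → ¬¬ψ`, and a state supports a formula iff some resolution of the formula
belongs to all of its worlds. By `ddn`, a declarative belongs to all worlds extending a theory only
if it belongs to the theory, so each prime theory `D` is the set of formulas supported by the state
of worlds extending `D`.

For `φ ⟹ ψ` outside a world `w`, the modal axioms make `χ ⟹ θ ∈ w` a consequence relation between
`χ` and `θ`. A prime theory for it containing `φ` but not `ψ` yields a neighborhood of `w` that
supports `φ` but not `ψ`.
-/

section Sections

variable {α : Type*} {L : List (List α)} {l : List α}

theorem exists_mem_sections_forall {p : α → Prop} (h : ∀ m ∈ L, ∃ a ∈ m, p a) :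
    ∃ l ∈ L.sections, ∀ a ∈ l, p a := by
  induction L with
  | nil => exact ⟨[], by simp⟩
  | cons m L ih =>
    obtain ⟨⟨a, ham, ha⟩, hL⟩ := List.forall_mem_cons.1 h
    obtain ⟨l, hl, hp⟩ := ih hL
    exact ⟨a :: l, List.mem_sections.2 (.cons ham (List.mem_sections.1 hl)),
      List.forall_mem_cons.2 ⟨ha, hp⟩⟩

theorem exists_mem_section_of_mem (hl : l ∈ L.sections) {m : List α} (hm : m ∈ L) :
    ∃ a ∈ m, a ∈ l := by
  have h := List.mem_sections.1 hl
  clear hl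
  induction h with
  | nil => cases hm
  | cons ha _ ih =>
    rcases List.mem_cons.1 hm with rfl | hm
    · exact ⟨_, ha, List.mem_cons_self⟩
    · obtain ⟨b, hb, hbl⟩ := ih hm
      exact ⟨b, hb, List.mem_cons_of_mem _ hbl⟩

theorem exists_list_mem_of_mem_section (hl : l ∈ L.sections) {a : α} (ha : a ∈ l) :
    ∃ m ∈ L, a ∈ m := by
  have h := List.mem_sections.1 hl
  clear hl
  induction h with
  | nil => cases ha
  | cons hb _ ih =>
    rcases List.mem_cons.1 ha with rfl | ha
    · exact ⟨_, List.mem_cons_self, hb⟩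
    · obtain ⟨m, hm, ham⟩ := ih ha
      exact ⟨m, List.mem_cons_of_mem _ hm, ham⟩

end Sections

section Completeness

variable {P : Type}

namespace Form

/-! ### Provable implication -/

variable {φ ψ χ θ : Form P}

/-- Formulas are preordered by provable implication. -/
instance : Preorder (Form P) where
  le φ ψ := Deriv (φ.impl ψ)
  le_refl φ := .mp (.mp (.ax_s (ψ := φ.impl φ)) .ax_k) .ax_k
  le_trans _ _ _ h h' := .mp (.mp .ax_s (.mp .ax_k h')) h

theorem le_of_deriv (h : Deriv ψ) : φ ≤ ψ := .mp .ax_k h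

theorem le_mp (h : χ ≤ φ.impl ψ) (h' : χ ≤ φ) : χ ≤ ψ := .mp (.mp .ax_s h) h'

theorem le_top : φ ≤ top := le_of_deriv (le_refl bot)

theorem bot_le : bot ≤ φ := Deriv.exfalso

theorem and_le_left : φ.and ψ ≤ φ := Deriv.and_elim_left

theorem and_le_right : φ.and ψ ≤ ψ := Deriv.and_elim_right

theorem le_and (h : χ ≤ φ) (h' : χ ≤ ψ) : χ ≤ φ.and ψ :=
  le_mp (h.trans Deriv.and_intro) h'

theorem le_idisj_left : φ ≤ φ.idisj ψ := Deriv.idisj_intro_left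

theorem le_idisj_right : ψ ≤ φ.idisj ψ := Deriv.idisj_intro_right

theorem idisj_le (h : φ ≤ χ) (h' : ψ ≤ χ) : φ.idisj ψ ≤ χ := .mp (.mp .idisj_elim h) h'

theorem le_impl_iff : χ ≤ φ.impl ψ ↔ χ.and φ ≤ ψ where
  mp h := le_mp (and_le_left.trans h) and_le_right
  mpr h := le_mp (le_mp (le_of_deriv .ax_s) (le_of_deriv (le_of_deriv h))) Deriv.and_intro

theorem and_comm_le : φ.and ψ ≤ ψ.and φ := le_and and_le_right and_le_left

theorem and_right_comm_le : (φ.and ψ).and χ ≤ (φ.and χ).and ψ :=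
  le_and (le_and (and_le_left.trans and_le_left) and_le_right) (and_le_left.trans and_le_right)

theorem and_idisj_le : φ.and (ψ.idisj χ) ≤ (φ.and ψ).idisj (φ.and χ) :=
  and_comm_le.trans <| le_impl_iff.1 <| idisj_le
    (le_impl_iff.2 (and_comm_le.trans le_idisj_left))
    (le_impl_iff.2 (and_comm_le.trans le_idisj_right))

theorem impl_le_impl_right (h : ψ ≤ χ) : φ.impl ψ ≤ φ.impl χ :=
  le_impl_iff.2 ((le_impl_iff.1 le_rfl).trans h)

theorem le_impl_self : ψ ≤ φ.impl ψ := Deriv.ax_k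

theorem neg_le_impl : φ.neg ≤ φ.impl ψ := impl_le_impl_right bot_le

theorem impl_and_impl_le : (φ.impl ψ).and (φ.impl χ) ≤ φ.impl (ψ.and χ) :=
  le_impl_iff.2 <| le_and
    (le_mp (and_le_left.trans and_le_left) and_le_right)
    (le_mp (and_le_left.trans and_le_right) and_le_right)

theorem le_neg_comm : φ ≤ ψ.neg ↔ ψ ≤ φ.neg where
  mp h := le_impl_iff.2 (and_comm_le.trans (le_impl_iff.1 h))
  mpr h := le_impl_iff.2 (and_comm_le.trans (le_impl_iff.1 h))

theorem le_neg_neg : φ ≤ φ.neg.neg := le_neg_comm.1 le_rfl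

theorem neg_neg_le_neg_neg (h : φ ≤ ψ.neg.neg) : φ.neg.neg ≤ ψ.neg.neg :=
  le_neg_comm.1 ((le_neg_comm.1 h).trans le_neg_neg)

theorem and_le_neg_comm (h : χ.and φ ≤ θ.neg) : χ.and θ ≤ φ.neg :=
  le_impl_iff.2 (and_right_comm_le.trans (le_impl_iff.1 h))

theorem and_neg_neg_le (h : χ.and φ ≤ θ.neg.neg) : χ.and φ.neg.neg ≤ θ.neg.neg :=
  and_le_neg_comm ((and_le_neg_comm h).trans le_neg_neg)

theorem neg_neg_and_neg_neg_le : φ.neg.neg.and ψ.neg.neg ≤ (φ.and ψ).neg.neg :=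
  and_comm_le.trans (and_neg_neg_le (and_comm_le.trans (and_neg_neg_le le_neg_neg)))

theorem le_neg_neg_idisj_neg : φ ≤ (ψ.idisj ψ.neg).neg.neg :=
  le_neg_comm.1 <| (le_mp
    (le_neg_comm.1 (le_idisj_right.trans le_neg_neg))
    (le_neg_comm.1 (le_idisj_left.trans le_neg_neg))).trans bot_le

theorem bigAnd_le : ∀ {l : List (Form P)}, φ ∈ l → bigAnd l ≤ φ
  | [_], h => (List.mem_singleton.1 h).ge
  | _ :: _ :: _, h => (List.mem_cons.1 h).elim (fun h => h ▸ and_le_left)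
    fun h => and_le_right.trans (bigAnd_le h)

theorem bigAnd_induction {p : Form P → Prop} (top : p top)
    (and : ∀ {φ ψ}, p φ → p ψ → p (φ.and ψ)) : ∀ {l : List (Form P)}, (∀ φ ∈ l, p φ) → p (bigAnd l)
  | [], _ => top
  | [φ], h => h φ List.mem_cons_self
  | φ :: _ :: _, h => and (h φ List.mem_cons_self)
    (bigAnd_induction top and fun χ hχ => h χ (List.mem_cons_of_mem φ hχ))

theorem le_bigAnd {l : List (Form P)} (h : ∀ φ ∈ l, χ ≤ φ) : χ ≤ bigAnd l :=
  bigAnd_induction le_top le_and h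

theorem isDecl_bigAnd {l : List (Form P)} (h : ∀ φ ∈ l, IsDecl φ) : IsDecl (bigAnd l) :=
  bigAnd_induction (.impl .bot .bot) .and h

end Form

/-! ### Consequence relations and prime theories -/

/-- A consequence relation on formulas: a transitive extension of provable implication for which
`∧` and `⩔` are meet and join. -/
structure Entailment (P : Type) where
  rel : Form P → Form P → Prop
  rel_of_le {φ ψ : Form P} : φ ≤ ψ → rel φ ψ
  trans {φ ψ χ : Form P} : rel φ ψ → rel ψ χ → rel φ χ
  rel_and {φ ψ χ : Form P} : rel χ φ → rel χ ψ → rel χ (φ.and ψ)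
  idisj_rel {φ ψ χ : Form P} : rel φ χ → rel ψ χ → rel (φ.idisj ψ) χ

namespace Entailment

open Form Order

variable {E : Entailment P} {D T : Set (Form P)} {φ ψ α : Form P}

/-- The consequence relation of the Hilbert system itself. -/
def provable (P : Type) : Entailment P := ⟨(· ≤ ·), id, le_trans, le_and, idisj_le⟩

/-- Classical consequence, obtained from the Hilbert system by double negation. -/
def classical (P : Type) : Entailment P where
  rel φ ψ := φ ≤ ψ.neg.neg
  rel_of_le h := h.trans le_neg_neg
  trans h h' := h.trans (neg_neg_le_neg_neg h')
  rel_and h h' := (le_and h h').trans neg_neg_and_neg_neg_le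
  idisj_rel := idisj_le

/-- A theory of `E`: a set of formulas closed under conjunction and `E`-consequence. -/
structure IsTheory (E : Entailment P) (D : Set (Form P)) : Prop where
  top_mem : top ∈ D
  and_mem {φ ψ : Form P} : φ ∈ D → ψ ∈ D → φ.and ψ ∈ D
  mem_of_rel {φ ψ : Form P} : E.rel φ ψ → φ ∈ D → ψ ∈ D

/-- A theory with the disjunction property for `⩔`. The set of all formulas counts as prime; it
corresponds to the empty information state. -/
structure IsPrimeTheory (E : Entailment P) (D : Set (Form P)) : Prop extends E.IsTheory D where
  mem_or_mem {φ ψ : Form P} : φ.idisj ψ ∈ D → φ ∈ D ∨ ψ ∈ D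

theorem IsTheory.mem_of_le (hD : E.IsTheory D) (h : φ ≤ ψ) : φ ∈ D → ψ ∈ D :=
  hD.mem_of_rel (E.rel_of_le h)

theorem IsTheory.mem_of_deriv (hD : E.IsTheory D) (h : Deriv φ) : φ ∈ D :=
  hD.mem_of_le (le_of_deriv h) hD.top_mem

theorem IsTheory.mem_of_impl_mem (hD : E.IsTheory D) (h : φ.impl ψ ∈ D) (hφ : φ ∈ D) : ψ ∈ D :=
  hD.mem_of_le (le_impl_iff.1 le_rfl) (hD.and_mem h hφ)

theorem IsTheory.bigAnd_mem_iff (hD : E.IsTheory D) {l : List (Form P)} :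
    bigAnd l ∈ D ↔ ∀ φ ∈ l, φ ∈ D :=
  ⟨fun h _ hφ => hD.mem_of_le (bigAnd_le hφ) h, bigAnd_induction hD.top_mem hD.and_mem⟩

theorem IsPrimeTheory.to_provable (hD : E.IsPrimeTheory D) : (provable P).IsPrimeTheory D :=
  ⟨⟨hD.top_mem, hD.and_mem, hD.mem_of_le⟩, hD.mem_or_mem⟩

theorem isTheory_setOf_rel (E : Entailment P) (φ : Form P) : E.IsTheory {χ | E.rel φ χ} :=
  ⟨E.rel_of_le le_top, E.rel_and, fun hrel hφ => E.trans hφ hrel⟩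

/-- The formulas preordered by `E`, as a type synonym to avoid the preorder of provable
implication. -/
def Formulas (_ : Entailment P) : Type := Form P

instance : Preorder E.Formulas where
  le := E.rel
  le_refl _ := E.rel_of_le le_rfl
  le_trans _ _ _ := E.trans

/-- The Lindenbaum–Tarski algebra of `E`. -/
abbrev Algebra (E : Entailment P) : Type := Antisymmetrization E.Formulas (· ≤ ·)

/-- The class of a formula in the Lindenbaum–Tarski algebra. -/
def toAlgebra (E : Entailment P) (φ : Form P) : E.Algebra :=
  toAntisymmetrization (α := E.Formulas) (· ≤ ·) φ

theorem rel_and_and {φ' ψ' : Form P} (h : E.rel φ φ') (h' : E.rel ψ ψ') :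
    E.rel (φ.and ψ) (φ'.and ψ') :=
  E.rel_and (E.trans (E.rel_of_le and_le_left) h) (E.trans (E.rel_of_le and_le_right) h')

theorem idisj_rel_idisj {φ' ψ' : Form P} (h : E.rel φ φ') (h' : E.rel ψ ψ') :
    E.rel (φ.idisj ψ) (φ'.idisj ψ') :=
  E.idisj_rel (E.trans h (E.rel_of_le le_idisj_left)) (E.trans h' (E.rel_of_le le_idisj_right))

instance : Lattice E.Algebra where
  inf := Quotient.map₂ Form.and fun _ _ h _ _ h' =>
    ⟨rel_and_and h.1 h'.1, rel_and_and h.2 h'.2⟩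
  sup := Quotient.map₂ Form.idisj fun _ _ h _ _ h' =>
    ⟨idisj_rel_idisj h.1 h'.1, idisj_rel_idisj h.2 h'.2⟩
  inf_le_left := by rintro ⟨φ⟩ ⟨ψ⟩; exact E.rel_of_le and_le_left
  inf_le_right := by rintro ⟨φ⟩ ⟨ψ⟩; exact E.rel_of_le and_le_right
  le_inf := by rintro ⟨χ⟩ ⟨φ⟩ ⟨ψ⟩; exact E.rel_and
  le_sup_left := by rintro ⟨φ⟩ ⟨ψ⟩; exact E.rel_of_le le_idisj_left
  le_sup_right := by rintro ⟨φ⟩ ⟨ψ⟩; exact E.rel_of_le le_idisj_right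
  sup_le := by rintro ⟨φ⟩ ⟨ψ⟩ ⟨χ⟩; exact E.idisj_rel

instance : DistribLattice E.Algebra :=
  .ofInfSupLe <| by rintro ⟨φ⟩ ⟨ψ⟩ ⟨χ⟩; exact E.rel_of_le and_idisj_le

theorem IsTheory.isPFilter_image (hT : E.IsTheory T) : IsPFilter (E.toAlgebra '' T) := by
  refine .of_def ⟨_, top, hT.top_mem, rfl⟩ ?_ ?_
  · rintro _ ⟨φ, hφ, rfl⟩ _ ⟨ψ, hψ, rfl⟩
    exact ⟨_, ⟨φ.and ψ, hT.and_mem hφ hψ, rfl⟩, E.rel_of_le and_le_left,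
      E.rel_of_le and_le_right⟩
  · rintro _ ⟨ψ⟩ h ⟨φ, hφ, rfl⟩
    exact ⟨ψ, hT.mem_of_rel h hφ, rfl⟩

theorem isPrimeTheory_setOf_notMem {J : Ideal E.Algebra} (hJ : J.IsPrime)
    (htop : E.toAlgebra top ∉ J) : E.IsPrimeTheory {φ | E.toAlgebra φ ∉ J} where
  top_mem := htop
  and_mem hφ hψ h := (hJ.mem_or_mem h).elim hφ hψ
  mem_of_rel h hφ hψ := hφ (J.lower h hψ)
  mem_or_mem h := by
    by_contra! hJ'
    simp only [Set.mem_ofPred_eq, not_not] at hJ'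
    exact h (J.sup_mem hJ'.1 hJ'.2)

theorem IsTheory.exists_isPrimeTheory (hT : E.IsTheory T) (hψ : ψ ∉ T) :
    ∃ D, E.IsPrimeTheory D ∧ T ⊆ D ∧ ψ ∉ D := by
  have hdisj : Disjoint (hT.isPFilter_image.toPFilter : Set E.Algebra)
      (Ideal.principal (E.toAlgebra ψ)) := by
    rw [Set.disjoint_left]
    rintro _ ⟨φ, hφ, rfl⟩ hle
    exact hψ (hT.mem_of_rel hle hφ)
  obtain ⟨J, hJ, hψJ, hTJ⟩ := DistribLattice.prime_ideal_of_disjoint_filter_ideal hdisj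
  have hT_notMem {φ : Form P} (hφ : φ ∈ T) : E.toAlgebra φ ∉ J :=
    Set.disjoint_left.1 hTJ ⟨φ, hφ, rfl⟩
  exact ⟨{φ | E.toAlgebra φ ∉ J}, isPrimeTheory_setOf_notMem hJ (hT_notMem hT.top_mem),
    fun _ => hT_notMem, not_not_intro (hψJ Ideal.mem_principal_self)⟩

theorem IsTheory.setOf_impl_mem (hD : (provable P).IsTheory D) (φ : Form P) :
    (provable P).IsTheory {χ | φ.impl χ ∈ D} where
  top_mem := hD.mem_of_deriv le_top
  and_mem h h' := hD.mem_of_le impl_and_impl_le (hD.and_mem h h')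
  mem_of_rel h := hD.mem_of_le (impl_le_impl_right h)

theorem IsPrimeTheory.setOf_impl_mem (hD : (provable P).IsPrimeTheory D) (hα : IsDecl α) :
    (provable P).IsPrimeTheory {χ | α.impl χ ∈ D} where
  toIsTheory := hD.toIsTheory.setOf_impl_mem α
  mem_or_mem h := hD.mem_or_mem (hD.mem_of_le (.split hα) h)

theorem IsTheory.setOf_neg_neg_mem (hD : E.IsTheory D) :
    (classical P).IsTheory {φ | φ.neg.neg ∈ D} where
  top_mem := hD.mem_of_le le_neg_neg hD.top_mem
  and_mem h h' := hD.mem_of_le neg_neg_and_neg_neg_le (hD.and_mem h h')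
  mem_of_rel h := hD.mem_of_le (neg_neg_le_neg_neg h)

theorem IsPrimeTheory.mem_or_neg_mem (hD : (classical P).IsPrimeTheory D) (φ : Form P) :
    φ ∈ D ∨ φ.neg ∈ D :=
  hD.mem_or_mem (hD.mem_of_rel le_neg_neg_idisj_neg hD.top_mem)

end Entailment

/-! ### Resolutions -/

open Form Entailment

/-- The resolutions of a formula: the declaratives whose inquisitive disjunction is its normal form.
A resolution of `φ → ψ` is a conjunction of implications `α → β`, choosing a resolution `β` of `ψ`
for each resolution `α` of `φ`; such choices are enumerated by `List.sections`. -/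
def Form.resolutions : Form P → List (Form P)
  | .atom p => [.atom p]
  | .bot => [.bot]
  | .and φ ψ => [φ.resolutions, ψ.resolutions].sections.map bigAnd
  | .impl φ ψ => (φ.resolutions.map fun α => ψ.resolutions.map α.impl).sections.map bigAnd
  | .idisj φ ψ => φ.resolutions ++ ψ.resolutions
  | .yields φ ψ => [φ.yields ψ]

/-- A set of formulas settles `φ` if it contains a resolution of `φ`. -/
def Settles (D : Set (Form P)) (φ : Form P) : Prop := ∃ α ∈ φ.resolutions, α ∈ D

section Resolutions

variable {E : Entailment P} {D : Set (Form P)} {φ ψ α : Form P}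

theorem isDecl_bigAnd_of_mem_sections {L : List (List (Form P))} {l : List (Form P)}
    (hL : ∀ m ∈ L, ∀ α ∈ m, IsDecl α) (hl : l ∈ L.sections) : IsDecl (bigAnd l) :=
  isDecl_bigAnd fun α hα =>
    let ⟨m, hm, hαm⟩ := exists_list_mem_of_mem_section hl hα
    hL m hm α hαm

theorem isDecl_of_mem_resolutions (hα : α ∈ φ.resolutions) : IsDecl α := by
  induction φ generalizing α with
  | atom p => exact List.mem_singleton.1 hα ▸ .atom p
  | bot => exact List.mem_singleton.1 hα ▸ .bot
  | and φ ψ ihφ ihψ =>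
    obtain ⟨l, hl, rfl⟩ := List.mem_map.1 hα
    refine isDecl_bigAnd_of_mem_sections ?_ hl
    simp only [List.forall_mem_cons, List.not_mem_nil, IsEmpty.forall_iff, implies_true, and_true]
    exact ⟨fun _ => ihφ, fun _ => ihψ⟩
  | impl φ ψ ihφ ihψ =>
    obtain ⟨l, hl, rfl⟩ := List.mem_map.1 hα
    refine isDecl_bigAnd_of_mem_sections ?_ hl
    simp only [List.forall_mem_map]
    exact fun α hα β hβ => .impl (ihφ hα) (ihψ hβ)
  | idisj φ ψ ihφ ihψ => exact (List.mem_append.1 hα).elim ihφ ihψ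
  | yields φ ψ => exact List.mem_singleton.1 hα ▸ .yields φ ψ

theorem Entailment.IsTheory.exists_bigAnd_section_mem_iff (hD : E.IsTheory D)
    (L : List (List (Form P))) :
    (∃ α ∈ L.sections.map bigAnd, α ∈ D) ↔ ∀ m ∈ L, ∃ α ∈ m, α ∈ D := by
  simp only [List.mem_map, exists_exists_and_eq_and, hD.bigAnd_mem_iff]
  refine ⟨fun ⟨l, hl, hlD⟩ m hm => ?_, exists_mem_sections_forall⟩
  obtain ⟨α, hαm, hαl⟩ := exists_mem_section_of_mem hl hm
  exact ⟨α, hαm, hlD α hαl⟩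

theorem settles_atom_iff {p : P} : Settles D (.atom p) ↔ .atom p ∈ D := by
  simp [Settles, resolutions]

theorem settles_bot_iff : Settles D .bot ↔ .bot ∈ D := by
  simp [Settles, resolutions]

theorem settles_yields_iff : Settles D (φ.yields ψ) ↔ φ.yields ψ ∈ D := by
  simp [Settles, resolutions]

theorem settles_idisj_iff : Settles D (φ.idisj ψ) ↔ Settles D φ ∨ Settles D ψ := by
  simp only [Settles, resolutions, List.mem_append, or_and_right, exists_or]

theorem settles_and_iff (hD : E.IsTheory D) :
    Settles D (φ.and ψ) ↔ Settles D φ ∧ Settles D ψ :=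
  (hD.exists_bigAnd_section_mem_iff _).trans (by simp [Settles])

theorem settles_impl_iff (hD : E.IsTheory D) :
    Settles D (φ.impl ψ) ↔ ∀ α ∈ φ.resolutions, ∃ β ∈ ψ.resolutions, α.impl β ∈ D :=
  (hD.exists_bigAnd_section_mem_iff _).trans (by simp)

theorem Entailment.IsPrimeTheory.impl_mem_iff_settles (hD : (provable P).IsPrimeTheory D)
    (ihφ : ∀ {D'}, (provable P).IsPrimeTheory D' → (φ ∈ D' ↔ Settles D' φ))
    (ihψ : ∀ {D'}, (provable P).IsPrimeTheory D' → (ψ ∈ D' ↔ Settles D' ψ)) :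
    φ.impl ψ ∈ D ↔ Settles D (φ.impl ψ) := by
  rw [settles_impl_iff hD.toIsTheory]
  constructor
  · intro h α hα
    have hDα := hD.setOf_impl_mem (isDecl_of_mem_resolutions hα)
    have hφ : φ ∈ {χ | α.impl χ ∈ D} := (ihφ hDα).2 ⟨α, hα, hD.mem_of_deriv (le_refl α)⟩
    exact (ihψ hDα).1 (hDα.mem_of_impl_mem (hD.mem_of_le le_impl_self h) hφ)
  · intro h
    by_contra hφψ
    obtain ⟨D', hD', hsub, hψ⟩ := (hD.toIsTheory.setOf_impl_mem φ).exists_isPrimeTheory hφψ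
    obtain ⟨α, hα, hαD'⟩ := (ihφ hD').1 (hsub (hD.mem_of_deriv (le_refl φ)))
    obtain ⟨β, hβ, hαβ⟩ := h α hα
    have hβD' : β ∈ D' := hD'.mem_of_impl_mem (hsub (hD.mem_of_le le_impl_self hαβ)) hαD'
    exact hψ ((ihψ hD').2 ⟨β, hβ, hβD'⟩)

theorem Entailment.IsPrimeTheory.mem_iff_settles (hD : (provable P).IsPrimeTheory D) :
    φ ∈ D ↔ Settles D φ := by
  induction φ generalizing D with
  | atom p => exact settles_atom_iff.symm
  | bot => exact settles_bot_iff.symm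
  | and φ ψ ihφ ihψ =>
    rw [settles_and_iff hD.toIsTheory, ← ihφ hD, ← ihψ hD]
    exact ⟨fun h => ⟨hD.mem_of_le and_le_left h, hD.mem_of_le and_le_right h⟩,
      fun h => hD.and_mem h.1 h.2⟩
  | impl φ ψ ihφ ihψ => exact hD.impl_mem_iff_settles ihφ ihψ
  | idisj φ ψ ihφ ihψ =>
    rw [settles_idisj_iff, ← ihφ hD, ← ihψ hD]
    exact ⟨hD.mem_or_mem, fun h => h.elim (hD.mem_of_le le_idisj_left)
      (hD.mem_of_le le_idisj_right)⟩
  | yields φ ψ => exact settles_yields_iff.symm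

end Resolutions

/-! ### The canonical model -/

/-- Worlds of the canonical model: the consistent prime theories of classical consequence. -/
def World (P : Type) : Type := {w : Set (Form P) // (classical P).IsPrimeTheory w ∧ bot ∉ w}

/-- The formulas belonging to every world of a state. -/
def commonTheory (s : Set (World P)) : Set (Form P) := {φ | ∀ w ∈ s, φ ∈ w.1}

/-- The state of all worlds extending a set of formulas. -/
def extensions (D : Set (Form P)) : Set (World P) := {w | D ⊆ w.1}

/-- The canonical model. Its neighborhoods of `w` are the nonempty states respecting every
`φ ⟹ ψ ∈ w`, where being settled by the common theory stands in for support. -/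
noncomputable def canonicalModel (P : Type) [Nonempty (World P)] : InModel P where
  W := World P
  ne := inferInstance
  Nb w := {t | t.Nonempty ∧ ∀ φ ψ, φ.yields ψ ∈ w.1 →
    Settles (commonTheory t) φ → Settles (commonTheory t) ψ}
  nb_nonempty _ _ h := h.1
  V w p := open Classical in decide (.atom p ∈ w.1)

section CanonicalModel

variable {E : Entailment P} {D : Set (Form P)} {s t : Set (World P)} {φ ψ α β : Form P}

theorem commonTheory_anti (h : t ⊆ s) : commonTheory s ⊆ commonTheory t :=
  fun _ hφ w hw => hφ w (h hw)

theorem isTheory_commonTheory (s : Set (World P)) : (classical P).IsTheory (commonTheory s) where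
  top_mem w _ := w.2.1.top_mem
  and_mem hφ hψ w hw := w.2.1.and_mem (hφ w hw) (hψ w hw)
  mem_of_rel h hφ w hw := w.2.1.mem_of_rel h (hφ w hw)

theorem bot_mem_commonTheory_iff : bot ∈ commonTheory s ↔ s = ∅ where
  mp h := Set.eq_empty_of_forall_notMem fun w hw => w.2.2 (h w hw)
  mpr h w hw := absurd hw (h ▸ Set.notMem_empty w)

theorem impl_mem_commonTheory (h : β ∈ commonTheory {w ∈ s | α ∈ w.1}) :
    α.impl β ∈ commonTheory s := by
  intro w hw
  rcases w.2.1.mem_or_neg_mem α with hα | hα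
  · exact w.2.1.mem_of_le le_impl_self (h w ⟨hw, hα⟩)
  · exact w.2.1.mem_of_le neg_le_impl hα

theorem exists_world_of_notMem (hD : E.IsTheory D) (hα : IsDecl α) (h : α ∉ D) :
    ∃ w ∈ extensions D, α ∉ w.1 := by
  have hα' : α ∉ {φ | φ.neg.neg ∈ D} := fun hα' => h (hD.mem_of_le (.ddn hα) hα')
  obtain ⟨w, hw, hDw, hαw⟩ := hD.setOf_neg_neg_mem.exists_isPrimeTheory hα'
  exact ⟨⟨w, hw, fun hbot => hαw (hw.mem_of_le bot_le hbot)⟩,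
    fun φ hφ => hDw (hD.mem_of_le le_neg_neg hφ), hαw⟩

theorem extensions_nonempty (hD : E.IsTheory D) (h : ψ ∉ D) : (extensions D).Nonempty :=
  let ⟨w, hw, _⟩ := exists_world_of_notMem hD .bot fun hbot => h (hD.mem_of_le bot_le hbot)
  ⟨w, hw⟩

theorem mem_commonTheory_extensions_iff (hD : E.IsTheory D) (hα : IsDecl α) :
    α ∈ commonTheory (extensions D) ↔ α ∈ D := by
  refine ⟨fun h => ?_, fun h w hw => hw h⟩
  by_contra hαD
  obtain ⟨w, hw, hαw⟩ := exists_world_of_notMem hD hα hαD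
  exact hαw (h w hw)

theorem settles_commonTheory_extensions_iff (hD : E.IsPrimeTheory D) :
    Settles (commonTheory (extensions D)) φ ↔ φ ∈ D :=
  (exists_congr fun _ => and_congr_right fun hα =>
    mem_commonTheory_extensions_iff hD.toIsTheory (isDecl_of_mem_resolutions hα)).trans
    hD.to_provable.mem_iff_settles.symm

/-- The consequence relation `χ ⟹ θ ∈ w` between `χ` and `θ`. -/
def World.entailment (w : World P) : Entailment P where
  rel φ ψ := φ.yields ψ ∈ w.1
  rel_of_le h := w.2.1.mem_of_deriv (.cn h)
  trans h h' := w.2.1.mem_of_le Deriv.trans (w.2.1.and_mem h h')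
  rel_and h h' := w.2.1.mem_of_le Deriv.rconj (w.2.1.and_mem h h')
  idisj_rel h h' := w.2.1.mem_of_le Deriv.ldisj (w.2.1.and_mem h h')

theorem forall_subset_settles_iff :
    (∀ t ⊆ s, Settles (commonTheory t) φ → Settles (commonTheory t) ψ) ↔
      Settles (commonTheory s) (φ.impl ψ) := by
  rw [settles_impl_iff (isTheory_commonTheory s)]
  constructor
  · intro h α hα
    obtain ⟨β, hβ, hβs⟩ := h {w ∈ s | α ∈ w.1} (fun w hw => hw.1) ⟨α, hα, fun w hw => hw.2⟩
    exact ⟨β, hβ, impl_mem_commonTheory hβs⟩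
  · rintro h t hts ⟨α, hα, hαt⟩
    obtain ⟨β, hβ, hαβ⟩ := h α hα
    exact ⟨β, hβ, (isTheory_commonTheory t).mem_of_impl_mem (commonTheory_anti hts hαβ) hαt⟩

variable [Nonempty (World P)]

theorem exists_neighborhood_of_yields_notMem {w : World P} (h : φ.yields ψ ∉ w.1) :
    ∃ t ∈ (canonicalModel P).Nb w,
      Settles (commonTheory t) φ ∧ ¬ Settles (commonTheory t) ψ := by
  obtain ⟨D, hD, hsub, hψ⟩ := (isTheory_setOf_rel w.entailment φ).exists_isPrimeTheory h
  have hφ : φ ∈ D := hsub (w.entailment.rel_of_le le_rfl)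
  refine ⟨extensions D, ⟨extensions_nonempty hD.toIsTheory hψ, fun χ θ hχθ => ?_⟩, ?_, ?_⟩
  · simp only [settles_commonTheory_extensions_iff hD]
    exact hD.mem_of_rel hχθ
  · exact (settles_commonTheory_extensions_iff hD).2 hφ
  · exact mt (settles_commonTheory_extensions_iff hD).1 hψ

theorem forall_neighborhood_settles_iff :
    (∀ w ∈ s, ∀ t ∈ (canonicalModel P).Nb w,
      Settles (commonTheory t) φ → Settles (commonTheory t) ψ) ↔
      Settles (commonTheory s) (φ.yields ψ) := by
  rw [settles_yields_iff]
  refine ⟨fun h w hw => ?_, fun h w hw t ht => ht.2 φ ψ (h w hw)⟩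
  by_contra hφψ
  obtain ⟨t, ht, hφ, hψ⟩ := exists_neighborhood_of_yields_notMem hφψ
  exact hψ (h w hw t ht hφ)

theorem support_canonicalModel_iff {s : Set (World P)} :
    support (canonicalModel P) φ s ↔ Settles (commonTheory s) φ := by
  induction φ generalizing s with
  | atom p =>
    rw [settles_atom_iff]
    classical exact forall₂_congr fun w _ => decide_eq_true_iff
  | bot => exact (settles_bot_iff.trans bot_mem_commonTheory_iff).symm
  | and φ ψ ihφ ihψ =>
    exact (and_congr ihφ ihψ).trans (settles_and_iff (isTheory_commonTheory s)).symm
  | impl φ ψ ihφ ihψ =>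
    refine Iff.trans ?_ forall_subset_settles_iff
    exact forall₂_congr fun t _ => imp_congr ihφ ihψ
  | idisj φ ψ ihφ ihψ => exact (or_congr ihφ ihψ).trans settles_idisj_iff.symm
  | yields φ ψ ihφ ihψ =>
    refine Iff.trans ?_ forall_neighborhood_settles_iff
    exact forall₄_congr fun w _ t _ => imp_congr ihφ ihψ

theorem support_extensions_iff (hD : E.IsPrimeTheory D) :
    support (canonicalModel P) φ (extensions D) ↔ φ ∈ D :=
  support_canonicalModel_iff.trans (settles_commonTheory_extensions_iff hD)

end CanonicalModel

theorem isTheory_setOf_sDeriv (Φ : Set (Form P)) : (provable P).IsTheory {φ | SDeriv Φ φ} where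
  top_mem := ⟨[], by simp, le_top⟩
  and_mem := by
    rintro φ ψ ⟨l, hl, hφ⟩ ⟨m, hm, hψ⟩
    refine ⟨l ++ m, fun χ hχ => (List.mem_append.1 hχ).elim (hl χ) (hm χ), le_and ?_ ?_⟩
    · exact (le_bigAnd fun χ hχ => bigAnd_le (List.mem_append_left m hχ)).trans hφ
    · exact (le_bigAnd fun χ hχ => bigAnd_le (List.mem_append_right l hχ)).trans hψ
  mem_of_rel := fun h ⟨l, hl, hφ⟩ => ⟨l, hl, le_trans hφ h⟩

theorem sDeriv_of_mem {Φ : Set (Form P)} {φ : Form P} (h : φ ∈ Φ) : SDeriv Φ φ :=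
  ⟨[φ], List.forall_mem_singleton.2 h, le_refl φ⟩

theorem exists_countermodel_of_not_sDeriv {Φ : Set (Form P)} {ψ : Form P} (h : ¬ SDeriv Φ ψ) :
    ∃ (M : InModel P) (s : Set M.W), (∀ φ ∈ Φ, support M φ s) ∧ ¬ support M ψ s := by
  obtain ⟨D, hD, hΦD, hψD⟩ := (isTheory_setOf_sDeriv Φ).exists_isPrimeTheory h
  have : Nonempty (World P) := (extensions_nonempty hD.toIsTheory hψD).to_type
  exact ⟨canonicalModel P, extensions D,
    fun φ hφ => (support_extensions_iff hD).2 (hΦD (sDeriv_of_mem hφ)),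
    mt (support_extensions_iff hD).1 hψD⟩

end Completeness

/-- strong completeness of the Hilbert system for `InqML_⟹`. -/
theorem strong_completeness {P : Type} (Φ : Set (Form P)) (ψ : Form P) :
    Entails Φ ψ → SDeriv Φ ψ := by
  intro hΦψ
  by_contra hψ
  obtain ⟨M, s, hΦs, hψs⟩ := exists_countermodel_of_not_sDeriv hψ
  exact hψs (hΦψ M s hΦs)
end
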